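/- arXiv:1807.03981 — 2 statements merged into one kernel-verified Lean document; each statement's English description precedes it below -/
import Mathlib

section
/- Let (X,Y) be a bivariate normal random vector with zero mean vector, variances (σ_X², σ_Y²) with σ_X > 0, σ_Y > 0, and correlation coefficient ρ ∈ (−1,1). Then the product Z = XY has a probability density function (with respect to Lebesgue measure) given by f_Z(x) = (1/(π σ_X σ_Y √(1−ρ²))) · exp(ρx/(σ_X σ_Y (1−ρ²))) · K₀(|x|/(σ_X σ_Y (1−ρ²))) for all real x. -/
/-! For fixed `x ≠ 0` the substitution `y = z / x` and Tonelli give `XY` the density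
`z ↦ ∫ |x|⁻¹ p(x, z / x) dx`, where `p` is the joint density of `(X, Y)`. On the hyperbola `xy = z`
the cross term of the Gaussian exponent is constant, and what remains is
`∫ |x|⁻¹ exp(-(a x² + b / x²)) dx` with `a = 1 / (2 σX² (1 - ρ²))` and `b = z² / (2 σY² (1 - ρ²))`.
Under `u = x²` this becomes `∫₀^∞ u⁻¹ exp(-(a u + b / u)) du`. Finally `u = √(b / a) eᵗ` balances
the two terms, `a u + b / u = 2 √(ab) cosh t`, and leaves
`∫ exp(-2 √(ab) cosh t) dt = 2 K₀(2 √(ab))` with `2 √(ab) = |z| / (σX σY (1 - ρ²))`. -/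

open MeasureTheory ProbabilityTheory

/-- The modified Bessel function of the second kind `K_ν(x)`, for `x > 0` given by
`K_ν(x) = ∫₀^∞ exp(−x cosh t) cosh(ν t) dt`. -/
noncomputable def besselK (ν x : ℝ) : ℝ :=
  ∫ t in Set.Ioi (0 : ℝ), Real.exp (-x * Real.cosh t) * Real.cosh (ν * t)

/-- The density of the centered bivariate Gaussian measure on `ℝ²` with covariance matrix
`[[σX², ρσXσY], [ρσXσY, σY²]]` (for `σX, σY > 0` and `ρ ∈ (−1,1)`). -/
noncomputable def binormalPDF (sx sy ρ : ℝ) (p : ℝ × ℝ) : ℝ :=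
  (1 / (2 * Real.pi * sx * sy * Real.sqrt (1 - ρ ^ 2))) *
    Real.exp (-(p.1 ^ 2 / sx ^ 2 - 2 * ρ * p.1 * p.2 / (sx * sy) + p.2 ^ 2 / sy ^ 2) /
      (2 * (1 - ρ ^ 2)))

section ChangeOfVariables

open Set

lemma lintegral_of_even {g : ℝ → ENNReal} (hg : ∀ x, g (-x) = g x) :
    ∫⁻ x, g x = 2 * ∫⁻ x in Ioi (0 : ℝ), g x := by
  have hneg : ∫⁻ x in Iio (0 : ℝ), g x = ∫⁻ x in Ioi (0 : ℝ), g x := by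
    simpa [hg] using ((Measure.measurePreserving_neg volume).setLIntegral_comp_preimage_emb
      (Homeomorph.neg ℝ).measurableEmbedding g (Iio 0)).symm
  rw [← lintegral_add_compl g measurableSet_Ioi, compl_Ioi, setLIntegral_congr Iio_ae_eq_Iic.symm,
    hneg, two_mul]

lemma lintegral_eq_lintegral_comp_mul_right (g : ℝ → ENNReal) {a : ℝ} (ha : a ≠ 0) :
    ∫⁻ x, g x = ENNReal.ofReal |a| * ∫⁻ x, g (x * a) := by
  rw [← (measurableEmbedding_mulRight₀ ha).lintegral_map g, ← smul_eq_mul, ← lintegral_smul_measure,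
    Real.smul_map_volume_mul_right ha]

lemma lintegral_Ioi_inv_mul_eq_lintegral_comp_exp (g : ℝ → ENNReal) :
    ∫⁻ x in Ioi (0 : ℝ), ENNReal.ofReal x⁻¹ * g x = ∫⁻ t, g (Real.exp t) := by
  have hsubst := lintegral_image_eq_lintegral_abs_deriv_mul MeasurableSet.univ
    (fun t _ => (Real.hasDerivAt_exp t).hasDerivWithinAt) Real.exp_injective.injOn
    (fun x => ENNReal.ofReal x⁻¹ * g x)
  rw [image_univ, Real.range_exp, setLIntegral_univ] at hsubst
  rw [hsubst]
  refine lintegral_congr fun t => ?_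
  rw [← mul_assoc, ← ENNReal.ofReal_mul (abs_nonneg _), Real.abs_exp,
    mul_inv_cancel₀ (Real.exp_ne_zero t), ENNReal.ofReal_one, one_mul]

lemma lintegral_abs_inv_mul_comp_sq (g : ℝ → ENNReal) :
    ∫⁻ x, ENNReal.ofReal |x|⁻¹ * g (x ^ 2) =
      ∫⁻ u in Ioi (0 : ℝ), ENNReal.ofReal u⁻¹ * g u :=
  calc ∫⁻ x, ENNReal.ofReal |x|⁻¹ * g (x ^ 2)
    _ = 2 * ∫⁻ x in Ioi (0 : ℝ), ENNReal.ofReal |x|⁻¹ * g (x ^ 2) :=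
        lintegral_of_even fun x => by rw [abs_neg, neg_sq]
    _ = 2 * ∫⁻ x in Ioi (0 : ℝ), ENNReal.ofReal x⁻¹ * g (x ^ 2) := by
        congr 1
        exact setLIntegral_congr_fun measurableSet_Ioi fun x hx => by rw [abs_of_pos (mem_Ioi.1 hx)]
    _ = 2 * ∫⁻ t, g (Real.exp (t * 2)) := by
        rw [lintegral_Ioi_inv_mul_eq_lintegral_comp_exp fun x => g (x ^ 2)]
        simp only [← Real.exp_nat_mul, Nat.cast_ofNat, mul_comm]
    _ = ∫⁻ t, g (Real.exp t) := by
        rw [lintegral_eq_lintegral_comp_mul_right (fun t => g (Real.exp t)) two_ne_zero,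
          abs_two, ENNReal.ofReal_ofNat]
    _ = ∫⁻ u in Ioi (0 : ℝ), ENNReal.ofReal u⁻¹ * g u :=
        (lintegral_Ioi_inv_mul_eq_lintegral_comp_exp g).symm

end ChangeOfVariables

lemma map_mul_withDensity {p : ℝ × ℝ → ENNReal} (hp : Measurable p) :
    Measure.map (fun q : ℝ × ℝ => q.1 * q.2) (volume.withDensity p) =
      (volume : Measure ℝ).withDensity
        fun z => ∫⁻ x, ENNReal.ofReal |x|⁻¹ * p (x, z / x) := by
  refine Measure.ext_of_lintegral _ fun f hf => ?_
  have hslice : ∀ x : ℝ, x ≠ 0 → ∫⁻ y, p (x, y) * f (x * y) =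
      ∫⁻ z, ENNReal.ofReal |x|⁻¹ * p (x, z / x) * f z := by
    intro x hx
    rw [lintegral_eq_lintegral_comp_mul_right _ (inv_ne_zero hx),
      ← lintegral_const_mul _ (by fun_prop)]
    simp only [← div_eq_mul_inv, mul_div_cancel₀ _ hx, abs_inv, mul_assoc]
  calc ∫⁻ z, f z ∂Measure.map (fun q : ℝ × ℝ => q.1 * q.2) (volume.withDensity p)
    _ = ∫⁻ q, p q * f (q.1 * q.2) := by
        rw [lintegral_map hf (by fun_prop),
          lintegral_withDensity_eq_lintegral_mul _ hp (by fun_prop)]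
        rfl
    _ = ∫⁻ x, ∫⁻ y, p (x, y) * f (x * y) := by
        rw [Measure.volume_eq_prod, lintegral_prod _ (by fun_prop)]
    _ = ∫⁻ x, ∫⁻ z, ENNReal.ofReal |x|⁻¹ * p (x, z / x) * f z :=
        lintegral_congr_ae <| (Measure.ae_ne volume 0).mono hslice
    _ = ∫⁻ z, ∫⁻ x, ENNReal.ofReal |x|⁻¹ * p (x, z / x) * f z :=
        lintegral_lintegral_swap (by fun_prop)
    _ = ∫⁻ z, (∫⁻ x, ENNReal.ofReal |x|⁻¹ * p (x, z / x)) * f z :=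
        lintegral_congr fun z => lintegral_mul_const _ (by fun_prop)
    _ = ∫⁻ z, f z ∂volume.withDensity fun z => ∫⁻ x, ENNReal.ofReal |x|⁻¹ * p (x, z / x) := by
        rw [lintegral_withDensity_eq_lintegral_mul _ (by fun_prop) hf]
        rfl

section BesselK

open Real Set

lemma one_add_sq_div_two_le_cosh (t : ℝ) : 1 + t ^ 2 / 2 ≤ cosh t := by
  have hsinh : (t / 2) ^ 2 ≤ sinh (t / 2) ^ 2 := by
    rw [sq_le_sq, abs_sinh]
    exact self_le_sinh_iff.2 (abs_nonneg _)
  have hcosh : cosh t = 1 + 2 * sinh (t / 2) ^ 2 := by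
    rw [← mul_div_cancel₀ t (two_ne_zero' ℝ), mul_div_assoc, cosh_two_mul, cosh_sq]
    ring_nf
  linarith

lemma integrable_exp_mul_sub_mul_cosh (ν : ℝ) {a : ℝ} (ha : 0 < a) :
    Integrable fun t => exp (ν * t - a * cosh t) := by
  have hgauss := integrable_exp_neg_mul_sq (b := a / 4) (by positivity)
  refine (hgauss.const_mul (exp (ν ^ 2 / a))).mono' (by fun_prop) (.of_forall fun t => ?_)
  have hν : ν * t ≤ ν ^ 2 / a + a / 4 * t ^ 2 := by
    have hsq : ν ^ 2 / a + a / 4 * t ^ 2 - ν * t = (ν - a * t / 2) ^ 2 / a := by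
      field_simp
      ring
    have hnonneg : 0 ≤ (ν - a * t / 2) ^ 2 / a := by positivity
    linarith
  rw [norm_eq_abs, abs_exp, ← exp_add, exp_le_exp]
  linarith [mul_le_mul_of_nonneg_left (one_add_sq_div_two_le_cosh t) ha.le]

lemma integral_exp_mul_sub_mul_cosh (ν : ℝ) {a : ℝ} (ha : 0 < a) :
    ∫ t, exp (ν * t - a * cosh t) = 2 * besselK ν a := by
  have hexp := integrable_exp_mul_sub_mul_cosh ν ha
  have hexp_neg := hexp.comp_neg
  have hsum (t : ℝ) : exp (ν * -t - a * cosh (-t)) + exp (ν * t - a * cosh t) =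
      2 * (exp (-a * cosh t) * cosh (ν * t)) := by
    rw [cosh_eq (ν * t), cosh_neg, sub_eq_add_neg, sub_eq_add_neg, exp_add, exp_add]
    ring_nf
  calc ∫ t, exp (ν * t - a * cosh t)
    _ = (∫ t in Iic 0, exp (ν * t - a * cosh t)) + ∫ t in Ioi 0, exp (ν * t - a * cosh t) :=
        (intervalIntegral.integral_Iic_add_Ioi hexp.integrableOn hexp.integrableOn).symm
    _ = (∫ t in Ioi 0, exp (ν * -t - a * cosh (-t))) + ∫ t in Ioi 0, exp (ν * t - a * cosh t) := by
        rw [integral_comp_neg_Ioi 0 fun t => exp (ν * t - a * cosh t), neg_zero]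
    _ = 2 * besselK ν a := by
        rw [← integral_add hexp_neg.integrableOn hexp.integrableOn, besselK, ← integral_const_mul]
        simp only [hsum]

lemma mul_exp_add_log_sqrt_add_div_exp {a b : ℝ} (ha : 0 < a) (hb : 0 < b) (t : ℝ) :
    a * exp (t + log √(b / a)) + b / exp (t + log √(b / a)) = 2 * √(a * b) * cosh t := by
  have hmul : a * √(b / a) = √(a * b) := by
    rw [sqrt_div hb.le, sqrt_mul ha.le]
    field_simp
    rw [sq_sqrt ha.le]
  have hdiv : b / √(b / a) = √(a * b) := by
    rw [sqrt_div hb.le, sqrt_mul ha.le]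
    field_simp
    rw [sq_sqrt hb.le]
  rw [cosh_eq, exp_neg, exp_add, exp_log (by positivity)]
  linear_combination exp t * hmul + (exp t)⁻¹ * hdiv

lemma lintegral_rpow_mul_exp_neg_add_div (ν : ℝ) {a b : ℝ} (ha : 0 < a) (hb : 0 < b) :
    ∫⁻ u in Ioi (0 : ℝ), ENNReal.ofReal u⁻¹ * ENNReal.ofReal (u ^ ν * exp (-(a * u + b / u))) =
      ENNReal.ofReal (2 * (b / a) ^ (ν / 2) * besselK ν (2 * √(a * b))) := by
  set s := log √(b / a) with hs
  have hpow : exp (ν * s) = (b / a) ^ (ν / 2) := by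
    rw [rpow_def_of_pos (by positivity), hs, log_sqrt (by positivity)]
    ring_nf
  have hshift (t : ℝ) : exp (t + s) ^ ν * exp (-(a * exp (t + s) + b / exp (t + s))) =
      (b / a) ^ (ν / 2) * exp (ν * t - 2 * √(a * b) * cosh t) := by
    rw [mul_exp_add_log_sqrt_add_div_exp ha hb, ← exp_mul, ← hpow, ← exp_add, ← exp_add]
    ring_nf
  calc ∫⁻ u in Ioi (0 : ℝ), ENNReal.ofReal u⁻¹ * ENNReal.ofReal (u ^ ν * exp (-(a * u + b / u)))
    _ = ∫⁻ t, ENNReal.ofReal (exp (t + s) ^ ν * exp (-(a * exp (t + s) + b / exp (t + s)))) := by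
        rw [lintegral_Ioi_inv_mul_eq_lintegral_comp_exp
            fun u => ENNReal.ofReal (u ^ ν * exp (-(a * u + b / u))),
          lintegral_add_right_eq_self
            (fun t => ENNReal.ofReal (exp t ^ ν * exp (-(a * exp t + b / exp t)))) s]
    _ = ENNReal.ofReal (∫ t, (b / a) ^ (ν / 2) * exp (ν * t - 2 * √(a * b) * cosh t)) := by
        simp only [hshift]
        exact (ofReal_integral_eq_lintegral_ofReal
          ((integrable_exp_mul_sub_mul_cosh ν (by positivity)).const_mul _)
          (.of_forall fun t => by positivity)).symm
    _ = ENNReal.ofReal (2 * (b / a) ^ (ν / 2) * besselK ν (2 * √(a * b))) := by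
        rw [integral_const_mul, integral_exp_mul_sub_mul_cosh ν (by positivity)]
        ring_nf

lemma lintegral_abs_inv_mul_exp_neg_sq_add_div_sq {a b : ℝ} (ha : 0 < a) (hb : 0 < b) :
    ∫⁻ x, ENNReal.ofReal |x|⁻¹ * ENNReal.ofReal (exp (-(a * x ^ 2 + b / x ^ 2))) =
      ENNReal.ofReal (2 * besselK 0 (2 * √(a * b))) := by
  rw [lintegral_abs_inv_mul_comp_sq fun u => ENNReal.ofReal (exp (-(a * u + b / u)))]
  simpa only [rpow_zero, zero_div, one_mul, mul_one] using
    lintegral_rpow_mul_exp_neg_add_div 0 ha hb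

end BesselK

section BivariateNormal

open Real

lemma binormalPDF_mk_div (sx sy ρ z : ℝ) {x : ℝ} (hx : x ≠ 0) :
    binormalPDF sx sy ρ (x, z / x) =
      1 / (2 * π * sx * sy * √(1 - ρ ^ 2)) * exp (ρ * z / (sx * sy * (1 - ρ ^ 2))) *
        exp (-((2 * sx ^ 2 * (1 - ρ ^ 2))⁻¹ * x ^ 2 +
          z ^ 2 / (2 * sy ^ 2 * (1 - ρ ^ 2)) / x ^ 2)) := by
  rw [binormalPDF, mul_assoc _ (exp _) (exp _), ← exp_add]
  congr 2
  rw [mul_assoc (2 * ρ) x, mul_div_cancel₀ z hx]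
  generalize 1 - ρ ^ 2 = D
  ring

lemma lintegral_binormalPDF_mk_div {sx sy ρ z : ℝ} (hsx : 0 < sx) (hsy : 0 < sy)
    (hρ : 0 < 1 - ρ ^ 2) (hz : z ≠ 0) :
    ∫⁻ x, ENNReal.ofReal |x|⁻¹ * ENNReal.ofReal (binormalPDF sx sy ρ (x, z / x)) =
      ENNReal.ofReal (1 / (π * sx * sy * √(1 - ρ ^ 2)) *
        exp (ρ * z / (sx * sy * (1 - ρ ^ 2))) * besselK 0 (|z| / (sx * sy * (1 - ρ ^ 2)))) := by
  set C := 1 / (2 * π * sx * sy * √(1 - ρ ^ 2)) * exp (ρ * z / (sx * sy * (1 - ρ ^ 2))) with hC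
  set a := (2 * sx ^ 2 * (1 - ρ ^ 2))⁻¹ with ha
  set b := z ^ 2 / (2 * sy ^ 2 * (1 - ρ ^ 2)) with hb
  have hsqrt : 2 * √(a * b) = |z| / (sx * sy * (1 - ρ ^ 2)) := by
    have hab : a * b = (|z| / (2 * (sx * sy * (1 - ρ ^ 2)))) ^ 2 := by
      rw [ha, hb, div_pow, sq_abs]
      field_simp
    rw [hab, sqrt_sq (by positivity)]
    field_simp
  calc ∫⁻ x, ENNReal.ofReal |x|⁻¹ * ENNReal.ofReal (binormalPDF sx sy ρ (x, z / x))
    _ = ∫⁻ x, ENNReal.ofReal C *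
          (ENNReal.ofReal |x|⁻¹ * ENNReal.ofReal (exp (-(a * x ^ 2 + b / x ^ 2)))) := by
        refine lintegral_congr_ae <| (Measure.ae_ne volume 0).mono fun x hx => ?_
        dsimp only
        rw [binormalPDF_mk_div sx sy ρ z hx, ENNReal.ofReal_mul (by positivity), mul_left_comm]
    _ = ENNReal.ofReal C * ENNReal.ofReal (2 * besselK 0 (|z| / (sx * sy * (1 - ρ ^ 2)))) := by
        rw [lintegral_const_mul _ (by fun_prop),
          lintegral_abs_inv_mul_exp_neg_sq_add_div_sq (by positivity) (by positivity), hsqrt]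
    _ = _ := by
        rw [← ENNReal.ofReal_mul (by positivity), hC]
        congr 1
        field_simp

end BivariateNormal

/-- If `(X,Y)` is a centered bivariate normal random vector with variances `(σX², σY²)` and
correlation `ρ ∈ (−1,1)`, then `Z = XY` has probability density function
`f_Z(x) = (1/(π σX σY √(1−ρ²))) exp(ρx/(σX σY (1−ρ²))) K₀(|x|/(σX σY (1−ρ²)))`. -/
theorem product_bivariate_normal_pdf
    {Ω : Type*} [MeasurableSpace Ω] (μ : Measure Ω) [IsProbabilityMeasure μ]
    (X Y : Ω → ℝ) (hX : Measurable X) (hY : Measurable Y)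
    (sx sy ρ : ℝ) (hsx : 0 < sx) (hsy : 0 < sy) (hρ : ρ ∈ Set.Ioo (-1 : ℝ) 1)
    (h : Measure.map (fun ω => (X ω, Y ω)) μ =
      (volume : Measure (ℝ × ℝ)).withDensity
        (fun p => ENNReal.ofReal (binormalPDF sx sy ρ p))) :
    Measure.map (fun ω => X ω * Y ω) μ =
      (volume : Measure ℝ).withDensity (fun x => ENNReal.ofReal
        (1 / (Real.pi * sx * sy * Real.sqrt (1 - ρ ^ 2)) *
          Real.exp (ρ * x / (sx * sy * (1 - ρ ^ 2))) *
          besselK 0 (|x| / (sx * sy * (1 - ρ ^ 2))))) := by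
  have hρ' : 0 < 1 - ρ ^ 2 := by nlinarith [hρ.1, hρ.2]
  have hpdf : Measurable fun q => ENNReal.ofReal (binormalPDF sx sy ρ q) := by
    unfold binormalPDF
    fun_prop
  calc Measure.map (fun ω => X ω * Y ω) μ
    _ = Measure.map (fun q : ℝ × ℝ => q.1 * q.2) (Measure.map (fun ω => (X ω, Y ω)) μ) :=
        (Measure.map_map (measurable_fst.mul measurable_snd) (hX.prodMk hY)).symm
    _ = volume.withDensity fun z => ∫⁻ x, ENNReal.ofReal |x|⁻¹ *
          ENNReal.ofReal (binormalPDF sx sy ρ (x, z / x)) := by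
        rw [h, map_mul_withDensity hpdf]
    _ = _ := withDensity_congr_ae <| (Measure.ae_ne volume 0).mono fun z hz =>
        lintegral_binormalPDF_mk_div hsx hsy hρ' hz
end

section
/- Let r > 0, θ ∈ ℝ, σ > 0. Let S be a random variable with the Gamma distribution with shape parameter r/2 and rate parameter 1/2 (density (1/(2^{r/2}Γ(r/2))) x^{r/2−1}e^{−x/2} for x > 0), and let T be a standard normal random variable independent of S. Then the random variable θS + σ√S·T has probability density function f(x) = (1/(σ√π Γ(r/2))) · exp(θx/σ²) · (|x|/(2√(θ²+σ²)))^{(r−1)/2} · K_{(r−1)/2}(√(θ²+σ²)|x|/σ²) for all real x. -/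
open MeasureTheory ProbabilityTheory

/-- The density of the variance-gamma distribution `VG(r, θ, σ, 0)`. -/
noncomputable def vgPDF (r θ σ x : ℝ) : ℝ :=
  1 / (σ * Real.sqrt Real.pi * Real.Gamma (r / 2)) * Real.exp (θ * x / σ ^ 2) *
    (|x| / (2 * Real.sqrt (θ ^ 2 + σ ^ 2))) ^ ((r - 1) / 2) *
    besselK ((r - 1) / 2) (Real.sqrt (θ ^ 2 + σ ^ 2) * |x| / σ ^ 2)

/-! Given `S = s`, the variable `θS + σ√S·T` is `N(θs, σ²s)`, so its law has the density
`x ↦ ∫ φ_{θs, σ²s}(x) γ(ds)`, where `γ` is the law of `S`. For `γ` a gamma law with rate `b`,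
expanding the square turns the integrand into a multiple of
`s ^ (ν - 1) * exp (-z / 2 * (s / c + c / s))` with `c = |x| / R`, `z = R|x| / σ²` and
`R² = θ² + 2bσ²`, where `ν + 1/2` is the shape of `γ`. The substitution `s = c eᵗ` turns the
exponential into `exp (-z cosh t)` and `s ^ (ν - 1) ds` into a multiple of `exp (νt) dt`; folding
the line at `t = 0` gives the integral defining `K_ν(z)`. -/

section BesselK

lemma sq_div_four_le_cosh (t : ℝ) : t ^ 2 / 4 ≤ Real.cosh t := by
  have hexp := Real.quadratic_le_exp_of_nonneg (abs_nonneg t)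
  rw [← Real.cosh_abs, Real.cosh_eq]
  nlinarith [sq_abs t, abs_nonneg t, Real.exp_pos (-|t|)]

lemma integrable_exp_neg_mul_cosh_add {z : ℝ} (hz : 0 < z) (ν : ℝ) :
    Integrable fun t : ℝ => Real.exp (-z * Real.cosh t + ν * t) := by
  have hgauss : Integrable fun t : ℝ =>
      Real.exp (2 * ν ^ 2 / z) * Real.exp (-(z / 8) * t ^ 2) :=
    (integrable_exp_neg_mul_sq (by positivity)).const_mul _
  refine hgauss.mono' (by fun_prop) (.of_forall fun t => ?_)
  rw [Real.norm_of_nonneg (Real.exp_pos _).le, ← Real.exp_add, Real.exp_le_exp]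
  have hcosh := mul_le_mul_of_nonneg_left (sq_div_four_le_cosh t) hz.le
  have hsq : 0 ≤ z / 8 * (t - 4 * ν / z) ^ 2 := by positivity
  have hexpand : z / 8 * (t - 4 * ν / z) ^ 2 = z / 8 * t ^ 2 - ν * t + 2 * ν ^ 2 / z := by
    field_simp
    ring
  linarith

lemma integral_exp_neg_mul_cosh_add {z : ℝ} (hz : 0 < z) (ν : ℝ) :
    ∫ t : ℝ, Real.exp (-z * Real.cosh t + ν * t) = 2 * besselK ν z := by
  set f : ℝ → ℝ := fun t => Real.exp (-z * Real.cosh t + ν * t)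
  have hf : Integrable f := integrable_exp_neg_mul_cosh_add hz ν
  calc ∫ t, f t = (∫ t in Set.Ioi 0, f (-t)) + ∫ t in Set.Ioi 0, f t := by
        rw [integral_comp_neg_Ioi, neg_zero,
          intervalIntegral.integral_Iic_add_Ioi hf.integrableOn hf.integrableOn]
    _ = ∫ t in Set.Ioi 0, (f (-t) + f t) :=
        (integral_add hf.comp_neg.integrableOn hf.integrableOn).symm
    _ = 2 * besselK ν z := by
        rw [besselK, ← integral_const_mul]
        congr with t
        simp only [f, Real.cosh_neg, mul_neg, Real.exp_add, Real.cosh_eq (ν * t)]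
        ring

lemma lintegral_Ioi_eq_lintegral_mul_exp {c : ℝ} (hc : 0 < c) (f : ℝ → ENNReal) :
    ∫⁻ s in Set.Ioi 0, f s = ∫⁻ t, ENNReal.ofReal (c * Real.exp t) * f (c * Real.exp t) := by
  have himage : (fun t => c * Real.exp t) '' Set.univ = Set.Ioi 0 := by
    ext s
    refine ⟨?_, fun hs => ⟨Real.log (s / c), trivial, ?_⟩⟩
    · rintro ⟨t, -, rfl⟩
      exact mul_pos hc (Real.exp_pos t)
    · simp only [Real.exp_log (div_pos hs hc), mul_div_cancel₀ s hc.ne']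
  rw [← himage, lintegral_image_eq_lintegral_abs_deriv_mul MeasurableSet.univ
    (fun t _ => ((Real.hasDerivAt_exp t).const_mul c).hasDerivWithinAt)
    ((mul_right_injective₀ hc.ne').comp Real.exp_injective).injOn, Measure.restrict_univ]
  simp only [abs_of_pos (mul_pos hc (Real.exp_pos _))]

/-- The normalising integral of the generalised inverse Gaussian distribution. -/
lemma lintegral_rpow_mul_exp_neg_div_add_div {c z : ℝ} (hc : 0 < c) (hz : 0 < z) (ν : ℝ) :
    ∫⁻ s in Set.Ioi 0,
        ENNReal.ofReal (s ^ (ν - 1) * Real.exp (-(z / 2 * (s / c + c / s)))) =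
      ENNReal.ofReal (2 * c ^ ν * besselK ν z) := by
  have hsubst (t : ℝ) : c * Real.exp t * ((c * Real.exp t) ^ (ν - 1) *
      Real.exp (-(z / 2 * (c * Real.exp t / c + c / (c * Real.exp t))))) =
      c ^ ν * Real.exp (-z * Real.cosh t + ν * t) := by
    have hpow : c * Real.exp t * (c * Real.exp t) ^ (ν - 1) = c ^ ν * Real.exp (ν * t) := by
      rw [mul_comm, ← Real.rpow_add_one (by positivity), sub_add_cancel,
        Real.mul_rpow hc.le (Real.exp_pos t).le, ← Real.exp_mul, mul_comm t]
    have hcosh : -(z / 2 * (c * Real.exp t / c + c / (c * Real.exp t))) = -z * Real.cosh t := by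
      rw [Real.cosh_eq, Real.exp_neg]
      field_simp
    rw [← mul_assoc, hpow, hcosh, Real.exp_add]
    ring
  have hint : Integrable fun t : ℝ => c ^ ν * Real.exp (-z * Real.cosh t + ν * t) :=
    (integrable_exp_neg_mul_cosh_add hz ν).const_mul _
  rw [lintegral_Ioi_eq_lintegral_mul_exp hc]
  simp only [← ENNReal.ofReal_mul (mul_pos hc (Real.exp_pos _)).le, hsubst]
  rw [← ofReal_integral_eq_lintegral_ofReal hint (.of_forall fun t => by positivity),
    integral_const_mul, integral_exp_neg_mul_cosh_add hz]
  ring_nf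

end BesselK

section Mixture

variable {Ω : Type*} [MeasurableSpace Ω] {μ : Measure Ω} [IsFiniteMeasure μ]

lemma map_eq_withDensity_lintegral_of_indepFun {α β γ : Type*} [MeasurableSpace α]
    [MeasurableSpace β] [MeasurableSpace γ] {ρ : Measure γ} [SFinite ρ] {X : Ω → α} {Y : Ω → β}
    (hX : AEMeasurable X μ) (hY : AEMeasurable Y μ) (hXY : IndepFun X Y μ)
    {F : α → β → γ} (hF : Measurable (Function.uncurry F))
    {p : α → γ → ENNReal} (hp : Measurable (Function.uncurry p))
    (hcond : ∀ᵐ x ∂μ.map X, (μ.map Y).map (F x) = ρ.withDensity (p x)) :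
    μ.map (fun ω => F (X ω) (Y ω)) = ρ.withDensity fun z => ∫⁻ x, p x z ∂μ.map X := by
  have hjoint : μ.map (fun ω => F (X ω) (Y ω)) =
      ((μ.map X).prod (μ.map Y)).map (Function.uncurry F) := by
    rw [← (indepFun_iff_map_prod_eq_prod_map_map hX hY).1 hXY,
      AEMeasurable.map_map_of_aemeasurable hF.aemeasurable (hX.prodMk hY)]
    rfl
  ext A hA
  rw [hjoint, Measure.map_apply hF hA, Measure.prod_apply (hF hA), withDensity_apply _ hA,
    lintegral_lintegral_swap (f := fun z x => p x z) (hp.comp measurable_swap).aemeasurable]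
  refine lintegral_congr_ae ?_
  filter_upwards [hcond] with x hx
  rw [← withDensity_apply _ hA, ← hx, Measure.map_apply hF.of_uncurry_left hA]
  rfl

lemma map_gaussianReal_add_mul_sqrt (m σ : ℝ) {s : ℝ} (hs : 0 ≤ s) :
    (gaussianReal 0 1).map (fun t => m + σ * Real.sqrt s * t) =
      gaussianReal m (σ ^ 2 * s).toNNReal := by
  have hvar : NNReal.mk ((σ * Real.sqrt s) ^ 2) (sq_nonneg _) = (σ ^ 2 * s).toNNReal := by
    rw [← Real.toNNReal_of_nonneg, mul_pow, Real.sq_sqrt hs]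
  have hcomp : (fun t => m + σ * Real.sqrt s * t) = (m + ·) ∘ (σ * Real.sqrt s * ·) := rfl
  rw [hcomp, ← Measure.map_map (by fun_prop) (by fun_prop), gaussianReal_map_const_mul,
    gaussianReal_map_const_add, hvar, mul_zero, zero_add, mul_one]

lemma measurable_uncurry_gaussianPDF_mul (θ σ : ℝ) :
    Measurable (Function.uncurry fun s => gaussianPDF (θ * s) (σ ^ 2 * s).toNNReal) := by
  have hparam : Measurable fun q : ℝ × ℝ => (θ * q.1, (σ ^ 2 * q.1).toNNReal, q.2) := by fun_prop
  exact measurable_uncurry_gaussianPDF.comp hparam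

lemma map_normal_mean_variance_mixture (θ : ℝ) {σ : ℝ} (hσ : σ ≠ 0) {S T : Ω → ℝ}
    (hS : AEMeasurable S μ) (hT : AEMeasurable T μ) (hST : IndepFun S T μ)
    (hpos : ∀ᵐ s ∂μ.map S, 0 < s) (hTlaw : μ.map T = gaussianReal 0 1) :
    μ.map (fun ω => θ * S ω + σ * Real.sqrt (S ω) * T ω) =
      volume.withDensity fun x =>
        ∫⁻ s, gaussianPDF (θ * s) (σ ^ 2 * s).toNNReal x ∂μ.map S := by
  refine map_eq_withDensity_lintegral_of_indepFun hS hT hST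
    (F := fun s t => θ * s + σ * Real.sqrt s * t) (by fun_prop)
    (measurable_uncurry_gaussianPDF_mul θ σ) ?_
  filter_upwards [hpos] with s hs
  have hvar : (σ ^ 2 * s).toNNReal ≠ 0 := (Real.toNNReal_pos.2 (by positivity)).ne'
  rw [hTlaw, map_gaussianReal_add_mul_sqrt (θ * s) σ hs.le, gaussianReal_of_var_ne_zero _ hvar]

end Mixture

section Gamma

lemma gammaMeasure_eq_withDensity_restrict_Ioi (a b : ℝ) :
    gammaMeasure a b = (volume.restrict (Set.Ioi 0)).withDensity (gammaPDF a b) := by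
  rw [gammaMeasure, ← withDensity_indicator measurableSet_Ioi]
  refine withDensity_congr_ae ?_
  filter_upwards [Measure.ae_ne volume (0 : ℝ)] with s hs
  rcases hs.lt_or_gt with hneg | hpos
  · rw [gammaPDF_of_neg hneg, Set.indicator_of_notMem (Set.notMem_Ioi.2 hneg.le)]
  · rw [Set.indicator_of_mem (Set.mem_Ioi.2 hpos)]

lemma ae_pos_gammaMeasure (a b : ℝ) : ∀ᵐ s ∂gammaMeasure a b, 0 < s := by
  rw [gammaMeasure_eq_withDensity_restrict_Ioi]
  exact (withDensity_absolutelyContinuous _ _).ae_le (ae_restrict_mem measurableSet_Ioi)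

lemma gammaPDFReal_mul_gaussianPDFReal {b θ σ R s x : ℝ} (a : ℝ) (hσ : σ ≠ 0) (hR : 0 < R)
    (hR2 : R ^ 2 = θ ^ 2 + 2 * b * σ ^ 2) (hs : 0 < s) (hx : x ≠ 0) :
    gammaPDFReal a b s * gaussianPDFReal (θ * s) (σ ^ 2 * s).toNNReal x =
      b ^ a / Real.Gamma a / Real.sqrt (2 * Real.pi * σ ^ 2) * Real.exp (θ * x / σ ^ 2) *
        (s ^ (a - 1 / 2 - 1) *
          Real.exp (-(R * |x| / σ ^ 2 / 2 * (s / (|x| / R) + |x| / R / s)))) := by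
  have hexponent : -(b * s) + -(x - θ * s) ^ 2 / (2 * (σ ^ 2 * s)) =
      θ * x / σ ^ 2 + -(R * |x| / σ ^ 2 / 2 * (s / (|x| / R) + |x| / R / s)) := by
    have hsum : R * |x| / σ ^ 2 / 2 * (s / (|x| / R) + |x| / R / s) =
        (R ^ 2 * s ^ 2 + x ^ 2) / (2 * σ ^ 2 * s) := by
      rw [← sq_abs x]
      field_simp
    rw [hsum, hR2]
    field_simp
    ring
  have hpow : s ^ (a - 1) / Real.sqrt s = s ^ (a - 1 / 2 - 1) := by
    rw [Real.sqrt_eq_rpow, ← Real.rpow_sub hs]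
    ring_nf
  have hsqrt : Real.sqrt (2 * Real.pi * (σ ^ 2 * s)) =
      Real.sqrt (2 * Real.pi * σ ^ 2) * Real.sqrt s := by
    rw [← Real.sqrt_mul (by positivity), mul_assoc _ (σ ^ 2)]
  rw [gammaPDFReal, if_pos hs.le, gaussianPDFReal, Real.coe_toNNReal _ (by positivity), hsqrt]
  calc _ = b ^ a / Real.Gamma a / Real.sqrt (2 * Real.pi * σ ^ 2) *
          (s ^ (a - 1) / Real.sqrt s) *
          Real.exp (-(b * s) + -(x - θ * s) ^ 2 / (2 * (σ ^ 2 * s))) := by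
        rw [Real.exp_add]
        ring
    _ = _ := by
        rw [hpow, hexponent, Real.exp_add]
        ring

lemma lintegral_gaussianPDF_gammaMeasure {a b θ σ R x : ℝ} (ha : 0 < a) (hb : 0 < b)
    (hσ : σ ≠ 0) (hR : 0 < R) (hR2 : R ^ 2 = θ ^ 2 + 2 * b * σ ^ 2) (hx : x ≠ 0) :
    ∫⁻ s, gaussianPDF (θ * s) (σ ^ 2 * s).toNNReal x ∂gammaMeasure a b =
      ENNReal.ofReal (b ^ a / Real.Gamma a / Real.sqrt (2 * Real.pi * σ ^ 2) *
        Real.exp (θ * x / σ ^ 2) *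
        (2 * (|x| / R) ^ (a - 1 / 2) * besselK (a - 1 / 2) (R * |x| / σ ^ 2))) := by
  have hconst : 0 ≤ b ^ a / Real.Gamma a / Real.sqrt (2 * Real.pi * σ ^ 2) *
      Real.exp (θ * x / σ ^ 2) := by positivity
  rw [gammaMeasure_eq_withDensity_restrict_Ioi,
    lintegral_withDensity_eq_lintegral_mul (f := gammaPDF a b) _
      (measurable_gammaPDFReal a b).ennreal_ofReal
      (measurable_uncurry_gaussianPDF_mul θ σ).of_uncurry_right,
    ENNReal.ofReal_mul hconst,
    ← lintegral_rpow_mul_exp_neg_div_add_div (by positivity) (by positivity),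
    ← lintegral_const_mul _ (by fun_prop)]
  refine setLIntegral_congr_fun measurableSet_Ioi fun s hs => ?_
  rw [← ENNReal.ofReal_mul hconst, ← gammaPDFReal_mul_gaussianPDFReal a hσ hR hR2 hs hx,
    ENNReal.ofReal_mul (gammaPDFReal_nonneg ha hb s)]
  rfl

lemma lintegral_gaussianPDF_gammaMeasure_eq_vgPDF {r σ x : ℝ} (θ : ℝ) (hr : 0 < r) (hσ : 0 < σ)
    (hx : x ≠ 0) :
    ∫⁻ s, gaussianPDF (θ * s) (σ ^ 2 * s).toNNReal x ∂gammaMeasure (r / 2) (1 / 2) =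
      ENNReal.ofReal (vgPDF r θ σ x) := by
  have hν : r / 2 - 1 / 2 = (r - 1) / 2 := by ring
  have hR2 : Real.sqrt (θ ^ 2 + σ ^ 2) ^ 2 = θ ^ 2 + 2 * (1 / 2) * σ ^ 2 := by
    rw [Real.sq_sqrt (by positivity)]
    ring
  have hsqrt : Real.sqrt (2 * Real.pi * σ ^ 2) = Real.sqrt 2 * Real.sqrt Real.pi * σ := by
    rw [Real.sqrt_mul (by positivity), Real.sqrt_mul zero_le_two, Real.sqrt_sq hσ.le]
  have htwo : (1 / 2 : ℝ) ^ (r / 2) / Real.sqrt 2 * 2 = (1 / 2) ^ ((r - 1) / 2) := by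
    rw [← hν, Real.rpow_sub (by norm_num), ← Real.sqrt_eq_rpow, Real.sqrt_div zero_le_one,
      Real.sqrt_one]
    field_simp
    rw [Real.sq_sqrt zero_le_two]
  have hscale : (|x| / (2 * Real.sqrt (θ ^ 2 + σ ^ 2))) ^ ((r - 1) / 2) =
      (1 / 2) ^ ((r - 1) / 2) * (|x| / Real.sqrt (θ ^ 2 + σ ^ 2)) ^ ((r - 1) / 2) := by
    rw [← Real.mul_rpow (by norm_num) (by positivity), div_mul_div_comm, one_mul]
  rw [lintegral_gaussianPDF_gammaMeasure (by positivity) (by norm_num) hσ.ne' (by positivity) hR2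
    hx, vgPDF, hν, hsqrt, hscale, ← htwo]
  ring_nf

end Gamma

/-- If `S ~ Γ(r/2, 1/2)` and `T ~ N(0,1)` are independent, then `θS + σ√S·T` has the
variance-gamma density `f` with parameters `(r, θ, σ, 0)`. -/
theorem gamma_normal_mixture_pdf
    {Ω : Type*} [MeasurableSpace Ω] (μ : Measure Ω) [IsProbabilityMeasure μ]
    (r θ σ : ℝ) (hr : 0 < r) (hσ : 0 < σ)
    (S T : Ω → ℝ) (hS : Measurable S) (hT : Measurable T)
    (hST : IndepFun S T μ)
    (hSlaw : Measure.map S μ = gammaMeasure (r / 2) (1 / 2))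
    (hTlaw : Measure.map T μ = gaussianReal 0 1) :
    Measure.map (fun ω => θ * S ω + σ * Real.sqrt (S ω) * T ω) μ =
      (volume : Measure ℝ).withDensity (fun x => ENNReal.ofReal (vgPDF r θ σ x)) := by
  have hpos : ∀ᵐ s ∂μ.map S, 0 < s := hSlaw ▸ ae_pos_gammaMeasure _ _
  rw [map_normal_mean_variance_mixture θ hσ.ne' hS.aemeasurable hT.aemeasurable hST hpos hTlaw,
    hSlaw]
  refine withDensity_congr_ae ?_
  -- At `x = 0` the formula evaluates `besselK` at `0`, where its defining integral diverges.
  filter_upwards [Measure.ae_ne volume (0 : ℝ)] with x hx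
  exact lintegral_gaussianPDF_gammaMeasure_eq_vgPDF θ hr hσ hx
end
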